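/- arXiv:2508.01041 — 3 statements merged into one kernel-verified Lean document; each statement's English description precedes it below -/
import Mathlib

section
/- Let (X,d) be a path-connected metric space with basepoint x₀. Then the following two statements are equivalent: (a) there exists 1 ≠ [α] ∈ π₁(X,x₀) such that for every ε > 0 there is a null-homotopic loop α′ : ([0,1],{0,1}) → (X,x₀) with d(α(t),α′(t)) < ε for all t ∈ [0,1]; (b) π₁(X,x₀) fails to be a T₁ space in the quotient topology induced by the compact-open topology on the loop space Ω(X,x₀). -/
open scoped unitInterval

noncomputable section

/-- The quotient topology on `π₁`, induced by the compact-open topology on the loop space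
(the topology on `Path x y` is the one induced by the compact-open topology on `C(I,X)`). -/
instance {X : Type*} [TopologicalSpace X] (x y : X) :
    TopologicalSpace (Path.Homotopic.Quotient x y) :=
  instTopologicalSpaceQuotient

theorem mem_closure_nullhomotopic_iff {X : Type*} [MetricSpace X] (x₀ : X) (α : Path x₀ x₀) :
    α ∈ closure {γ : Path x₀ x₀ | γ.Homotopic (Path.refl x₀)} ↔
      ∀ ε > (0:ℝ), ∃ α' : Path x₀ x₀, α'.Homotopic (Path.refl x₀) ∧
        ∀ t : I, dist (α t) (α' t) < ε := by
  have hind : Topology.IsInducing (fun γ : Path x₀ x₀ => (γ.toContinuousMap : C(I, X))) := ⟨rfl⟩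
  rw [hind.closure_eq_preimage_closure_image, Set.mem_preimage, Metric.mem_closure_iff]
  refine forall_congr' fun ε => forall_congr' fun hε => ?_
  simp only [Set.exists_mem_image, Set.mem_setOf_eq]
  refine exists_congr fun γ => and_congr_right fun _ => ?_
  exact ContinuousMap.dist_lt_iff hε

theorem t1Space_iff_isClosed_nullhomotopic {X : Type*} [TopologicalSpace X] (x₀ : X) :
    T1Space (Path.Homotopic.Quotient x₀ x₀) ↔
      IsClosed {γ : Path x₀ x₀ | γ.Homotopic (Path.refl x₀)} := by
  have key : ∀ β : Path x₀ x₀, IsClosed {γ : Path x₀ x₀ | γ.Homotopic β} ↔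
      IsClosed ({Path.Homotopic.Quotient.mk β} : Set (Path.Homotopic.Quotient x₀ x₀)) := by
    intro β
    have hq : Topology.IsQuotientMap
        (Path.Homotopic.Quotient.mk : Path x₀ x₀ → Path.Homotopic.Quotient x₀ x₀) :=
      isQuotientMap_quot_mk
    rw [← hq.isClosed_preimage]
    have : {γ : Path x₀ x₀ | γ.Homotopic β} =
        Path.Homotopic.Quotient.mk ⁻¹' {Path.Homotopic.Quotient.mk β} := by
      ext γ
      exact Path.Homotopic.Quotient.eq.symm
    rw [this]
  constructor
  · intro h
    exact (key _).2 isClosed_singleton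
  · intro h
    refine ⟨fun b => ?_⟩
    induction b using Path.Homotopic.Quotient.ind with
    | mk β =>
    rw [← key]
    have hc : Continuous (fun γ : Path x₀ x₀ => γ.trans β.symm) :=
      Path.continuous_trans.comp (continuous_id.prodMk continuous_const)
    have := h.preimage hc
    convert this using 1
    ext γ
    simp only [Set.mem_setOf_eq, Set.mem_preimage]
    constructor
    · intro hγ
      exact (hγ.hcomp (Path.Homotopic.refl _)).trans ⟨(Path.Homotopy.reflTransSymm β).symm⟩
    · intro hγ
      have h1 : ((γ.trans β.symm).trans β).Homotopic β :=
        (hγ.hcomp (Path.Homotopic.refl β)).trans ⟨Path.Homotopy.reflTrans β⟩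
      have h2 : ((γ.trans β.symm).trans β).Homotopic γ :=
        Path.Homotopic.trans ⟨Path.Homotopy.transAssoc γ β.symm β⟩
          (((Path.Homotopic.refl γ).hcomp ⟨(Path.Homotopy.reflSymmTrans β).symm⟩).trans
            ⟨Path.Homotopy.transRefl γ⟩)
      exact h2.symm.trans h1

/-- For a path-connected metric space `(X,d)` with basepoint `x₀`, the
following are equivalent: (a) there is an essential loop `α` at `x₀` that can be uniformly
approximated, to every `ε > 0`, by null-homotopic loops at `x₀`; (b) the fundamental group
`π₁(X,x₀)`, with the quotient topology induced by the compact-open topology on the loop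
space `Ω(X,x₀)`, fails to be T₁. -/
theorem statement2 {X : Type*} [MetricSpace X] [PathConnectedSpace X] (x₀ : X) :
    (∃ α : Path x₀ x₀, ¬ α.Homotopic (Path.refl x₀) ∧
      ∀ ε > (0:ℝ), ∃ α' : Path x₀ x₀, α'.Homotopic (Path.refl x₀) ∧
        ∀ t : I, dist (α t) (α' t) < ε) ↔
    ¬ T1Space (Path.Homotopic.Quotient x₀ x₀) := by
  rw [t1Space_iff_isClosed_nullhomotopic, ← closure_subset_iff_isClosed, Set.not_subset]
  refine exists_congr fun α => ?_
  rw [mem_closure_nullhomotopic_iff, and_comm]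
  rfl

end
end

section
/- Let α : [0,1] → 𝔻 be a nonconstant path. If β₁, β₂ : [0,1] → 𝔻 are paths with f ∘ β₁ = α and f ∘ β₂ = α, where f is the shift map, then β₁ = β₂. -/
open scoped unitInterval

noncomputable section

/-- The base segment `B = [0,1] × {0}` of the dyadic arc space. -/
def B2 : Set (ℝ × ℝ) := {p | p.1 ∈ Set.Icc (0:ℝ) 1 ∧ p.2 = 0}

/-- The upper semicircle `𝔻_{n,j}` with center `((2j-1)/2ⁿ, 0)` and radius `1/2ⁿ`. -/
def Dnj (n j : ℕ) : Set (ℝ × ℝ) :=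
  {p | (p.1 - (2*(j:ℝ)-1)/2^n)^2 + p.2^2 = (1/2^n)^2 ∧ 0 ≤ p.2}

/-- The dyadic arc space `𝔻 ⊆ ℝ²`. -/
def Dspace : Set (ℝ × ℝ) :=
  B2 ∪ ⋃ (n : ℕ) (_ : 1 ≤ n) (j : ℕ) (_ : 1 ≤ j) (_ : j ≤ 2^(n-1)), Dnj n j

/-- The dyadic arc space as a topological space. -/
abbrev DD : Type := ↥Dspace

/-- The basepoint `d₀ = (0,0)` of `𝔻`. -/
def d0 : DD := ⟨((0:ℝ), (0:ℝ)), Or.inl ⟨⟨le_refl _, zero_le_one⟩, rfl⟩⟩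

theorem d0_mem_B : ((d0 : DD) : ℝ × ℝ) ∈ B2 := ⟨⟨le_refl _, zero_le_one⟩, rfl⟩

/-- Characterization of the shift map `f : 𝔻 → 𝔻`: it fixes `B` pointwise, and it maps each
point of `𝔻_{n,j}` to the point of `𝔻_{n+1,2j-1} ∪ 𝔻_{n+1,2j}` with the same first
coordinate (and nonnegative second coordinate). -/
def IsShiftMap (f : DD → DD) : Prop :=
  (∀ p : DD, (p : ℝ × ℝ) ∈ B2 → f p = p) ∧
  ∀ n j : ℕ, 1 ≤ n → 1 ≤ j → j ≤ 2^(n-1) → ∀ p : DD, (p : ℝ × ℝ) ∈ Dnj n j →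
    ((f p : ℝ × ℝ).1 = (p : ℝ × ℝ).1 ∧
      ((f p : ℝ × ℝ) ∈ Dnj (n+1) (2*j-1) ∪ Dnj (n+1) (2*j)))

lemma arc_eq {n j : ℕ} {p : ℝ × ℝ} (h : p ∈ Dnj (n+1) j) :
    p.2^2 * (2^n)^2 = (2^n * p.1 - ((j:ℝ)-1)) * (j - 2^n * p.1) := by
  obtain ⟨h, -⟩ := h
  have hN : (2:ℝ)^n ≠ 0 := by positivity
  field_simp at h
  linear_combination h / 4

lemma arc_bd {n j : ℕ} {p : ℝ × ℝ} (h : p ∈ Dnj (n+1) j) (hp : 0 < p.2) :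
    (j:ℝ) - 1 < 2^n * p.1 ∧ 2^n * p.1 < j := by
  have h1 := arc_eq h
  have h2 : 0 < (2^n * p.1 - ((j:ℝ)-1)) * (j - 2^n * p.1) := by rw [← h1]; positivity
  rcases pos_and_pos_or_neg_and_neg_of_mul_pos h2 with ⟨a, b⟩ | ⟨a, b⟩ <;> constructor <;> linarith

lemma arc_zero {n j : ℕ} {p : ℝ × ℝ} (h : p ∈ Dnj (n+1) j) (hp : p.2 = 0) :
    ∃ z : ℤ, 2^n * p.1 = z := by
  have h1 := arc_eq h
  rw [hp] at h1
  have h2 : (2^n * p.1 - ((j:ℝ)-1)) * (j - 2^n * p.1) = 0 := by rw [← h1]; ring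
  rcases mul_eq_zero.1 h2 with h | h
  · exact ⟨(j:ℤ) - 1, by push_cast; linarith⟩
  · exact ⟨j, by push_cast; linarith⟩

lemma arc_inter_le {n j m k : ℕ} {p : ℝ × ℝ} (h : p ∈ Dnj (n+1) j) (h' : p ∈ Dnj (m+1) k)
    (hp : 0 < p.2) (hnm : n ≤ m) : n = m ∧ j = k := by
  obtain ⟨d, rfl⟩ := Nat.exists_eq_add_of_le hnm
  obtain ⟨a1, a2⟩ := arc_bd h hp
  obtain ⟨b1, b2⟩ := arc_bd h' hp
  have e1 := arc_eq h
  have e2 := arc_eq h'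
  have hN : (0:ℝ) < 2^n := by positivity
  rw [pow_add] at b1 b2 e2
  have hM : (1:ℝ) ≤ 2^d := one_le_pow₀ (by norm_num)
  have c1 : (2:ℤ)^d * (j - 1) ≤ k - 1 := by
    have : ((2:ℤ)^d * (j - 1) : ℤ) < k := by
      have : ((((2:ℤ)^d * (j - 1) : ℤ)) : ℝ) < ((k:ℤ):ℝ) := by
        push_cast; nlinarith
      exact_mod_cast this
    lia
  have c2 : (k:ℤ) ≤ 2^d * j := by
    have : ((k:ℤ) - 1) < 2^d * j := by
      have : ((((k:ℤ) - 1 : ℤ)) : ℝ) < (((2:ℤ)^d * j : ℤ):ℝ) := by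
        push_cast; nlinarith
      exact_mod_cast this
    lia
  have c1' : (2:ℝ)^d * (j - 1) ≤ k - 1 := by exact_mod_cast c1
  have c2' : (k:ℝ) ≤ 2^d * j := by exact_mod_cast c2
  have e3 : (2^d * (2^n * p.1) - 2^d * ((j:ℝ)-1)) * (2^d * j - 2^d * (2^n * p.1)) =
     (2^d * (2^n * p.1) - ((k:ℝ)-1)) * (k - 2^d * (2^n * p.1)) := by
    linear_combination (-(2^d)^2) * e1 + e2
  generalize hu : (2:ℝ)^d * (2^n * p.1) = u at e3
  have b1' : (k:ℝ) - 1 < u := by rw [← hu]; linarith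
  have b2' : u < k := by rw [← hu]; linarith
  generalize hA : (2:ℝ)^d * ((j:ℝ)-1) = A at e3 c1'
  generalize hB : (2:ℝ)^d * (j:ℝ) = C at e3 c2'
  have q1 : A = k - 1 := by
    nlinarith [mul_nonneg (sub_nonneg.2 c1') (sub_pos.2 b2').le,
      mul_nonneg (sub_nonneg.2 c2') (sub_pos.2 b1').le,
      mul_nonneg (sub_nonneg.2 c1') (sub_nonneg.2 c2')]
  have q2 : C = k := by
    nlinarith
  have hd : (2:ℝ)^d = 1 := by linear_combination hB - hA + q2 - q1
  have hd0 : d = 0 := by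
    by_contra hne
    exact absurd hd (one_lt_pow₀ (by norm_num) hne).ne'
  subst hd0
  refine ⟨rfl, ?_⟩
  rw [q2] at hB
  have : (j:ℝ) = k := by simpa using hB
  exact_mod_cast this

lemma arc_inter {n j m k : ℕ} {p : ℝ × ℝ} (h : p ∈ Dnj (n+1) j) (h' : p ∈ Dnj (m+1) k)
    (hp : 0 < p.2) : n = m ∧ j = k := by
  rcases le_total n m with hl | hl
  · exact arc_inter_le h h' hp hl
  · obtain ⟨a, b⟩ := arc_inter_le h' h hp hl
    exact ⟨a.symm, b.symm⟩

lemma arc_same {n j : ℕ} {p q : ℝ × ℝ} (h : p ∈ Dnj n j) (h' : q ∈ Dnj n j)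
    (hx : p.1 = q.1) : p = q := by
  obtain ⟨a, a'⟩ := h
  obtain ⟨b, b'⟩ := h'
  rw [hx] at a
  have : p.2^2 = q.2^2 := by linarith
  exact Prod.ext hx ((sq_eq_sq₀ a' b').1 this)

lemma int_not_between {z : ℤ} {k : ℕ} (h1 : (k:ℝ) - 1 < z) (h2 : (z:ℝ) < k) : False := by
  have a : ((k:ℤ) - 1) < z := by exact_mod_cast h1
  have b : z < k := by exact_mod_cast h2
  lia

lemma DD_cases (p : DD) : (p : ℝ × ℝ) ∈ B2 ∨
    (0 < (p : ℝ × ℝ).2 ∧ ∃ n j : ℕ, 1 ≤ j ∧ j ≤ 2^n ∧ (p : ℝ × ℝ) ∈ Dnj (n+1) j) := by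
  obtain ⟨p, hp⟩ := p
  rcases hp with hp | hp
  · exact Or.inl hp
  · simp only [Set.mem_iUnion] at hp
    obtain ⟨n, hn, j, hj, hj', h⟩ := hp
    obtain ⟨n, rfl⟩ := Nat.exists_eq_add_of_le' hn
    simp only [Nat.add_sub_cancel] at hj'
    rcases h.2.lt_or_eq with h0 | h0
    · exact Or.inr ⟨h0, n, j, hj, hj', h⟩
    · left
      refine ⟨?_, h0.symm⟩
      have e := arc_eq h
      rw [← h0] at e
      have hN : (0:ℝ) < 2^n := by positivity
      have hj1 : (1:ℝ) ≤ j := by exact_mod_cast hj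
      have hj2 : (j:ℝ) ≤ 2^n := by exact_mod_cast hj'
      have h2 : (2^n * p.1 - ((j:ℝ)-1)) * (j - 2^n * p.1) = 0 := by rw [← e]; ring
      have : 0 ≤ 2^n * p.1 ∧ 2^n * p.1 ≤ 2^n * 1 := by
        rcases mul_eq_zero.1 h2 with h | h <;> constructor <;> linarith
      exact ⟨nonneg_of_mul_nonneg_right this.1 hN, le_of_mul_le_mul_left this.2 hN⟩

lemma peak {f : DD → DD} (hs : IsShiftMap f) {p : DD} {n j : ℕ} (hj : 1 ≤ j) (hj' : j ≤ 2^n)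
    (hp : (p : ℝ × ℝ) ∈ Dnj (n+1) j) (h0 : (f p : ℝ × ℝ).2 = 0) :
    ∃ z : ℤ, 2^(n+1) * (p : ℝ × ℝ).1 = z := by
  obtain ⟨a, b⟩ := hs.2 (n+1) j (by lia) hj (by simpa using hj') p hp
  rw [← a]
  rcases b with b | b <;> exact arc_zero b h0

lemma peak_inj {f : DD → DD} (hs : IsShiftMap f) {p q : DD} {n j m k : ℕ}
    (hj : 1 ≤ j) (hj' : j ≤ 2^n) (hp : (p : ℝ × ℝ) ∈ Dnj (n+1) j)
    (hqm : (q : ℝ × ℝ) ∈ Dnj (m+1) k) (hq : 0 < (q : ℝ × ℝ).2)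
    (hx : (p : ℝ × ℝ).1 = (q : ℝ × ℝ).1) (h0 : (f p : ℝ × ℝ).2 = 0) : m ≤ n := by
  by_contra hlt
  obtain ⟨d, rfl⟩ := Nat.exists_eq_add_of_le (Nat.succ_le_of_lt (not_le.1 hlt))
  obtain ⟨z, hz⟩ := peak hs hj hj' hp h0
  obtain ⟨a, b⟩ := arc_bd hqm hq
  have : (2:ℝ)^(n.succ + d) * (q : ℝ × ℝ).1 = ((2^d * z : ℤ) : ℝ) := by
    push_cast
    rw [← hz, hx, Nat.succ_eq_add_one, pow_add]; ring
  rw [this] at a b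
  exact int_not_between a b

lemma f_inj {f : DD → DD} (hs : IsShiftMap f) {p q : DD}
    (hp : 0 < (p : ℝ × ℝ).2) (hq : 0 < (q : ℝ × ℝ).2) (h : f p = f q) : p = q := by
  rcases DD_cases p with hb | ⟨-, n, j, hj, hj', hpn⟩
  · exact absurd hb.2 hp.ne'
  rcases DD_cases q with hb | ⟨-, m, k, hk, hk', hqm⟩
  · exact absurd hb.2 hq.ne'
  obtain ⟨a, b⟩ := hs.2 (n+1) j (by lia) hj (by simpa using hj') p hpn
  obtain ⟨c, d⟩ := hs.2 (m+1) k (by lia) hk (by simpa using hk') q hqm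
  have hx : (p : ℝ × ℝ).1 = (q : ℝ × ℝ).1 := by rw [← a, ← c, h]
  suffices n = m ∧ j = k by
    obtain ⟨rfl, rfl⟩ := this
    exact Subtype.ext (arc_same hpn hqm hx)
  have hnn : 0 ≤ (f p : ℝ × ℝ).2 := by
    rcases b with b | b <;> exact b.2
  rcases hnn.lt_or_eq with h0 | h0
  · rw [← h] at d
    rcases b with b | b <;> rcases d with d | d <;> have := arc_inter b d h0 <;> lia
  · have e1 := peak_inj hs hj hj' hpn hqm hq hx h0.symm
    have e2 := peak_inj hs hk hk' hqm hpn hp hx.symm (by rw [← h]; exact h0.symm)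
    have e : n = m := le_antisymm e2 e1
    subst e
    refine ⟨rfl, ?_⟩
    obtain ⟨a1, a2⟩ := arc_bd hpn hp
    obtain ⟨b1, b2⟩ := arc_bd hqm hq
    rw [hx] at a1 a2
    have u1 : (j:ℝ) < k + 1 := by linarith
    have u2 : (k:ℝ) < j + 1 := by linarith
    have u1' : j < k + 1 := by exact_mod_cast u1
    have u2' : k < j + 1 := by exact_mod_cast u2
    lia

lemma f_zero {f : DD → DD} (hs : IsShiftMap f) {p q : DD}
    (hp : (p : ℝ × ℝ) ∈ B2) (hq : (q : ℝ × ℝ) ∈ B2) (h : f p = f q) : p = q := by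
  rw [hs.1 p hp, hs.1 q hq] at h; exact h

lemma fiber_finite {f : DD → DD} (hs : IsShiftMap f) (c : DD) : {p | f p = c}.Finite := by
  have : {p | f p = c} = {p | f p = c ∧ (p : ℝ × ℝ) ∈ B2} ∪
      {p | f p = c ∧ 0 < (p : ℝ × ℝ).2} := by
    ext p
    have := DD_cases p
    simp only [Set.mem_ofPred_eq, Set.mem_union]
    tauto
  rw [this]
  refine Set.Finite.union (Set.Subsingleton.finite ?_) (Set.Subsingleton.finite ?_)
  · rintro p ⟨h, hp⟩ q ⟨h', hq⟩
    exact f_zero hs hp hq (h.trans h'.symm)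
  · rintro p ⟨h, hp⟩ q ⟨h', hq⟩
    exact f_inj hs hp hq (h.trans h'.symm)

def Dy : Set (ℝ × ℝ) := Set.range (fun v : ℕ × ℤ => ((v.2 : ℝ) / 2^v.1, (0:ℝ)))

lemma ne_dy_aux {f : DD → DD} (hs : IsShiftMap f) {p q : DD} (h : f p = f q)
    (hp : (p : ℝ × ℝ) ∈ B2) (hq : 0 < (q : ℝ × ℝ).2) : (f p : ℝ × ℝ) ∈ Dy := by
  rcases DD_cases q with hb | ⟨-, n, j, hj, hj', hqn⟩
  · exact absurd hb.2 hq.ne'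
  have e := hs.1 p hp
  have h0 : (f p : ℝ × ℝ).2 = 0 := by rw [e]; exact hp.2
  obtain ⟨z, hz⟩ := peak hs hj hj' hqn (by rw [← h]; exact h0)
  have a := (hs.2 (n+1) j (by lia) hj (by simpa using hj') q hqn).1
  refine ⟨(n+1, z), Prod.ext ?_ h0.symm⟩
  rw [h, a]
  simp only
  rw [← hz]
  field_simp

lemma ne_dy {f : DD → DD} (hs : IsShiftMap f) {p q : DD} (h : f p = f q) (hne : p ≠ q) :
    (f p : ℝ × ℝ) ∈ Dy := by
  rcases DD_cases p with hp | ⟨hp, -⟩ <;> rcases DD_cases q with hq | ⟨hq, -⟩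
  · exact absurd (f_zero hs hp hq h) hne
  · exact ne_dy_aux hs h hp hq
  · rw [h]; exact ne_dy_aux hs h.symm hq hp
  · exact absurd (f_inj hs hp hq h) hne

/-- Let `α : [0,1] → 𝔻` be a nonconstant path. If `β₁, β₂` are paths with
`f ∘ β₁ = α = f ∘ β₂`, where `f` is the shift map, then `β₁ = β₂`. -/
theorem statement5 (f : DD → DD) (hf : Continuous f) (hs : IsShiftMap f)
    (α : C(I, DD)) (hnc : ¬ ∃ c, ∀ t, α t = c)
    (β₁ β₂ : C(I, DD)) (h₁ : ∀ t, f (β₁ t) = α t) (h₂ : ∀ t, f (β₂ t) = α t) :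
    β₁ = β₂ := by
  by_contra hne
  obtain ⟨t₀, ht₀⟩ : ∃ t, β₁ t ≠ β₂ t := by
    by_contra hall
    push Not at hall
    exact hne (ContinuousMap.ext hall)
  let W : Set I := {t | β₁ t ≠ β₂ t ∧ α t = α t₀}
  have hfin := fiber_finite hs (α t₀)
  have hclosed : IsClosed W := by
    have hF : (({p | f p = α t₀} ×ˢ {p | f p = α t₀}) ∩ {v : DD × DD | v.1 ≠ v.2}).Finite :=
      (hfin.prod hfin).inter_of_left _
    have : W = (fun t => (β₁ t, β₂ t)) ⁻¹'
        (({p | f p = α t₀} ×ˢ {p | f p = α t₀}) ∩ {v : DD × DD | v.1 ≠ v.2}) := by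
      ext t
      simp only [W, Set.mem_ofPred_eq, Set.mem_preimage, Set.mem_inter_iff, Set.mem_prod, h₁, h₂]
      tauto
    rw [this]
    exact hF.isClosed.preimage (by fun_prop)
  have hU : IsOpen {t | β₁ t ≠ β₂ t} := isOpen_ne_fun β₁.continuous β₂.continuous
  have hopen : IsOpen W := by
    rw [isOpen_iff_mem_nhds]
    rintro t ⟨ht, hα⟩
    obtain ⟨V, hVo, htV, hVc, hVU⟩ : ∃ V : Set I, IsOpen V ∧ t ∈ V ∧ IsPreconnected V ∧
        V ⊆ {t | β₁ t ≠ β₂ t} := by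
      obtain ⟨ε, hε, hb⟩ := Metric.isOpen_iff.1 hU t ht
      refine ⟨Metric.ball t ε, Metric.isOpen_ball, Metric.mem_ball_self hε, ?_, hb⟩
      have e : Metric.ball t ε = (Subtype.val : I → ℝ) ⁻¹' Metric.ball (t : ℝ) ε := rfl
      rw [e, Real.ball_eq_Ioo]
      exact (Set.ordConnected_Ioo.preimage_mono (Subtype.mono_coe _)).isPreconnected
    refine Filter.mem_of_superset (hVo.mem_nhds htV) fun s hs' => ⟨hVU hs', ?_⟩
    rw [← hα]
    have hc : Continuous fun t => ((α t : DD) : ℝ × ℝ) := by fun_prop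
    have himg := hVc.image _ hc.continuousOn
    have hsub : (fun t => ((α t : DD) : ℝ × ℝ)) '' V ⊆ Dy := by
      rintro _ ⟨r, hr, rfl⟩
      have := ne_dy hs ((h₁ r).trans (h₂ r).symm) (hVU hr)
      rwa [h₁] at this
    have hcount : Dy.Countable := Set.countable_range _
    have := (hcount.mono hsub).isTotallyDisconnected _ subset_rfl himg
    exact Subtype.ext (this ⟨s, hs', rfl⟩ ⟨t, htV, rfl⟩)
  have huniv : W = Set.univ := IsClopen.eq_univ ⟨hclosed, hopen⟩ ⟨t₀, ht₀, rfl⟩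
  refine hnc ⟨α t₀, fun t => ?_⟩
  have : t ∈ W := huniv ▸ Set.mem_univ t
  exact this.2

end
end

section
/- Let X be a metric space and let α : [a₀,b₀] → X be a non-constant reduced path. If [a₁,b₁] ⊆ [a₀,b₀] and α ≡ α|_{[a₁,b₁]} (i.e., α is equivalent to its restriction to [a₁,b₁]), then [a₁,b₁] = [a₀,b₀]. -/
open scoped unitInterval

noncomputable section

/-- The affine subpath of `α : C([a,b], X)` from `s` to `t`, as a `Path`. -/
def subPath {X : Type*} [TopologicalSpace X] {a b : ℝ} (α : C(Set.Icc a b, X))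
    (s t : Set.Icc a b) (hst : (s : ℝ) ≤ (t : ℝ)) : Path (α s) (α t) where
  toFun u := α ⟨(1 - (u : ℝ)) * (s : ℝ) + (u : ℝ) * (t : ℝ),
    ⟨le_trans s.2.1 (by nlinarith [u.2.1, u.2.2]),
     le_trans (by nlinarith [u.2.1, u.2.2]) t.2.2⟩⟩
  continuous_toFun := by
    apply α.continuous.comp; apply Continuous.subtype_mk; fun_prop
  source' := by apply congrArg α; apply Subtype.ext; simp
  target' := by apply congrArg α; apply Subtype.ext; simp

/-- A path `α : [a,b] → X` is *reduced* if it is constant or if for all `s < t` with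
`α(s) = α(t)`, the loop `α|_{[s,t]}` is not null-homotopic. -/
def IsReducedOn {X : Type*} [TopologicalSpace X] {a b : ℝ} (α : C(Set.Icc a b, X)) : Prop :=
  (∃ c, ∀ u, α u = c) ∨
  ∀ (s t : Set.Icc a b) (hst : (s : ℝ) < (t : ℝ)) (he : α s = α t),
    ¬ ((subPath α s t hst.le).cast rfl he).Homotopic (Path.refl (α s))

/-- Equivalence (`≡`) of paths on intervals: equality up to an increasing homeomorphism of
the parameter intervals. -/
def PathEquivOn {X : Type*} [TopologicalSpace X] {a b c d : ℝ}
    (α : C(Set.Icc a b, X)) (β : C(Set.Icc c d, X)) : Prop :=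
  ∃ γ : Set.Icc a b ≃ₜ Set.Icc c d, StrictMono (fun u => γ u) ∧ ∀ u, α u = β (γ u)

/-- Restriction of `α : C([a,b], X)` to the subinterval `[c,d]` (via clamping; for
`[c,d] ⊆ [a,b]` this is the restriction `α|_{[c,d]}`). -/
def resIcc {X : Type*} [TopologicalSpace X] {a b : ℝ} (α : C(Set.Icc a b, X)) (hab : a ≤ b)
    (c d : ℝ) : C(Set.Icc c d, X) :=
  α.comp ⟨fun u => Set.projIcc a b hab (u : ℝ), continuous_projIcc.comp continuous_subtype_val⟩

/-- The reverse of a path on `[c,d]`. -/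
def reverseIcc {X : Type*} [TopologicalSpace X] {c d : ℝ} (β : C(Set.Icc c d, X)) :
    C(Set.Icc c d, X) :=
  ⟨fun u => β ⟨c + d - (u : ℝ), ⟨by linarith [u.2.1, u.2.2], by linarith [u.2.1, u.2.2]⟩⟩,
    β.continuous.comp (by apply Continuous.subtype_mk; fun_prop)⟩

/-- The path `α : [a,b] → X` reparametrized affinely as a `Path` on `[0,1]`. -/
def toPathIcc {X : Type*} [TopologicalSpace X] {a b : ℝ} (hab : a ≤ b)
    (α : C(Set.Icc a b, X)) :
    Path (α ⟨a, Set.left_mem_Icc.mpr hab⟩) (α ⟨b, Set.right_mem_Icc.mpr hab⟩) :=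
  subPath α _ _ hab

theorem const_contra {X : Type*} [TopologicalSpace X] {a b : ℝ} (α : C(Set.Icc a b, X))
    (h : ∀ (s t : Set.Icc a b) (hst : (s : ℝ) < (t : ℝ)) (he : α s = α t),
      ¬ ((subPath α s t hst.le).cast rfl he).Homotopic (Path.refl (α s)))
    (s t : Set.Icc a b) (hst : (s : ℝ) < (t : ℝ)) (c : X)
    (hc : ∀ x, s ≤ x → x ≤ t → α x = c) : False := by
  have hle : s ≤ t := hst.le
  have he : α s = α t := by rw [hc s le_rfl hle, hc t hle le_rfl]
  apply h s t hst he
  have : (subPath α s t hst.le).cast rfl he = Path.refl (α s) := by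
    ext u
    have h1 := u.2.1
    have h2 := u.2.2
    show α ⟨_, _⟩ = α s
    rw [hc s le_rfl hle]
    apply hc
    · show (s : ℝ) ≤ (1 - (u : ℝ)) * (s : ℝ) + (u : ℝ) * (t : ℝ)
      nlinarith
    · show (1 - (u : ℝ)) * (s : ℝ) + (u : ℝ) * (t : ℝ) ≤ (t : ℝ)
      nlinarith
  rw [this]

theorem fixed_of {X : Type*} [MetricSpace X] {a b : ℝ} (α : C(Set.Icc a b, X))
    (h : ∀ (s t : Set.Icc a b) (hst : (s : ℝ) < (t : ℝ)) (he : α s = α t),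
      ¬ ((subPath α s t hst.le).cast rfl he).Homotopic (Path.refl (α s)))
    (g : Set.Icc a b → Set.Icc a b) (hg : Continuous g) (hm : Monotone g)
    (hα : ∀ x, α (g x) = α x) (c : Set.Icc a b) : g c = c := by
  have hit : ∀ n x, α (g^[n] x) = α x := by
    intro n
    induction n with
    | zero => intro x; rfl
    | succ n ih => intro x; rw [Function.iterate_succ_apply, ih, hα]
  -- if the iterates of `c` converge to `p`, then `α` is constant between `c` and `p`
  have key : ∀ p, Filter.Tendsto (fun n => g^[n] c) Filter.atTop (nhds p) →
      (g p = p) ∧ ∀ x, (c ≤ x ∧ x ≤ p) ∨ (p ≤ x ∧ x ≤ c) → α x = α p := by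
    intro p hp
    have hfix : g p = p := isFixedPt_of_tendsto_iterate hp hg.continuousAt
    refine ⟨hfix, fun x hx => ?_⟩
    have hpn : ∀ n, g^[n] p = p := fun n => Function.iterate_fixed hfix n
    have hx' : Filter.Tendsto (fun n => g^[n] x) Filter.atTop (nhds p) := by
      rcases hx with ⟨h1, h2⟩ | ⟨h1, h2⟩
      · refine tendsto_of_tendsto_of_tendsto_of_le_of_le hp tendsto_const_nhds
          (fun n => hm.iterate n h1) (fun n => ?_)
        have := hm.iterate n h2
        rwa [hpn] at this
      · refine tendsto_of_tendsto_of_tendsto_of_le_of_le tendsto_const_nhds hp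
          (fun n => ?_) (fun n => hm.iterate n h2)
        have := hm.iterate n h1
        rwa [hpn] at this
    have h3 := (α.continuous.tendsto p).comp hx'
    have h4 : (α ∘ fun n => g^[n] x) = fun _ => α x := funext fun n => hit n x
    rw [h4] at h3
    exact tendsto_nhds_unique tendsto_const_nhds h3
  have lift : ∀ q : ℝ, Filter.Tendsto (fun n => ((g^[n] c : Set.Icc a b) : ℝ))
      Filter.atTop (nhds q) → ∃ p : Set.Icc a b, (p : ℝ) = q ∧
        Filter.Tendsto (fun n => g^[n] c) Filter.atTop (nhds p) := by
    intro q hq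
    have hqm : q ∈ Set.Icc a b :=
      isClosed_Icc.mem_of_tendsto hq (Filter.Eventually.of_forall fun n => (g^[n] c).2)
    exact ⟨⟨q, hqm⟩, rfl, tendsto_subtype_rng.mpr hq⟩
  rcases lt_trichotomy (g c) c with hlt | heq | hgt
  · exfalso
    have hanti : Antitone (fun n => g^[n] c) := hm.antitone_iterate_of_map_le hlt.le
    have hbdd : BddBelow (Set.range fun n => ((g^[n] c : Set.Icc a b) : ℝ)) :=
      ⟨a, by rintro _ ⟨n, rfl⟩; exact (g^[n] c).2.1⟩
    obtain ⟨p, hpq, hp⟩ := lift _ (tendsto_atTop_ciInf (fun m n hmn => hanti hmn) hbdd)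
    have hle : p ≤ g c := hanti.le_of_tendsto hp 1
    exact const_contra α h p c (lt_of_le_of_lt hle hlt) (α p)
      (fun x h1 h2 => (key p hp).2 x (Or.inr ⟨h1, h2⟩))
  · exact heq
  · exfalso
    have hmono : Monotone (fun n => g^[n] c) := hm.monotone_iterate_of_le_map hgt.le
    have hbdd : BddAbove (Set.range fun n => ((g^[n] c : Set.Icc a b) : ℝ)) :=
      ⟨b, by rintro _ ⟨n, rfl⟩; exact (g^[n] c).2.2⟩
    obtain ⟨p, hpq, hp⟩ := lift _ (tendsto_atTop_ciSup (fun m n hmn => hmono hmn) hbdd)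
    have hle : g c ≤ p := hmono.ge_of_tendsto hp 1
    exact const_contra α h c p (lt_of_lt_of_le hgt hle) (α p)
      (fun x h1 h2 => (key p hp).2 x (Or.inl ⟨h1, h2⟩))

/-- If `α : [a₀,b₀] → X` is a non-constant reduced path in a metric space
`X` and `[a₁,b₁] ⊆ [a₀,b₀]` with `α ≡ α|_{[a₁,b₁]}`, then `[a₁,b₁] = [a₀,b₀]`. -/
theorem statement6 {X : Type*} [MetricSpace X] {a₀ b₀ : ℝ} (hab : a₀ ≤ b₀)
    (α : C(Set.Icc a₀ b₀, X)) (hred : IsReducedOn α) (hnc : ¬ ∃ c, ∀ u, α u = c)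
    (a₁ b₁ : ℝ) (h₁ : a₀ ≤ a₁) (h₂ : a₁ ≤ b₁) (h₃ : b₁ ≤ b₀)
    (heq : PathEquivOn α (resIcc α hab a₁ b₁)) :
    a₁ = a₀ ∧ b₁ = b₀ := by
  have h := hred.resolve_left hnc
  obtain ⟨γ, hγ, hα⟩ := heq
  let g : Set.Icc a₀ b₀ → Set.Icc a₀ b₀ :=
    fun x => ⟨(γ x : ℝ), le_trans h₁ (γ x).2.1, le_trans (γ x).2.2 h₃⟩
  have hfix := fixed_of α h g
    (Continuous.subtype_mk (continuous_subtype_val.comp γ.continuous) _)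
    (fun x y hxy => hγ.monotone hxy)
    (fun x => by
      rw [hα x]
      show α (g x) = α (Set.projIcc a₀ b₀ hab (γ x : ℝ))
      rw [Set.projIcc_of_mem hab (g x).2])
  have ha := congrArg Subtype.val (hfix ⟨a₀, Set.left_mem_Icc.mpr hab⟩)
  have hb := congrArg Subtype.val (hfix ⟨b₀, Set.right_mem_Icc.mpr hab⟩)
  have ha' := (γ ⟨a₀, Set.left_mem_Icc.mpr hab⟩).2.1
  have hb' := (γ ⟨b₀, Set.right_mem_Icc.mpr hab⟩).2.2
  simp only [g] at ha hb
  constructor <;> linarith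

end
end
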